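/- Let L be a finite atomic, coatomic, graded lattice. For a basis I of L define I^opp := { ⋁(I ∖ {a}) : a ∈ I }, a set of coatoms of L, i.e. atoms of the dual lattice L^opp. Then I^opp is a basis of L^opp, and the map opp : B(L) → B(L^opp) sending I to I^opp is a bijection from the set of bases of L to the set of bases of L^opp. -/

import Mathlib

open Set

/-- `rk` is a rank function witnessing that a (bounded) lattice is graded:
it sends `⊥` to `0`, is strictly monotone, and increases by exactly one along covers. -/
def IsGradedRk {L : Type*} [CompleteLattice L] (rk : L → ℕ) : Prop :=
  rk ⊥ = 0 ∧ (∀ a b : L, a < b → rk a < rk b) ∧ (∀ a b : L, a ⋖ b → rk b = rk a + 1)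

/-- `D` is bounded below with respect to the order on atoms encoded by the labeling `ω`:
`D` is nonempty and some atom `a` is a strict `ω`-lower bound of every element of `D`
with `a ≤ ⋁ D`. -/
def IsBB {L : Type*} [CompleteLattice L] (ω : L → ℕ) (D : Set L) : Prop :=
  D.Nonempty ∧ ∃ a : L, IsAtom a ∧ (∀ d ∈ D, ω a < ω d) ∧ a ≤ sSup D

/-- `B` is a set of atoms containing no bounded-below subset. -/
def IsNBB {L : Type*} [CompleteLattice L] (ω : L → ℕ) (B : Set L) : Prop :=
  (∀ b ∈ B, IsAtom b) ∧ ∀ D ⊆ B, ¬ IsBB ω D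

/-- The family `I(L)` of independent sets of the lattice `L`: all sets of atoms that are
NBB with respect to some linear order on the atoms (a linear order on the atoms of the
finite lattice `L` being encoded as an `ℕ`-valued labeling injective on atoms). -/
def latIndep (L : Type*) [CompleteLattice L] : Set (Set L) :=
  { A | ∃ ω : L → ℕ, Set.InjOn ω {a : L | IsAtom a} ∧ IsNBB ω A }

/-- A basis of a (finite atomic graded) lattice with rank function `rk`: a maximal
independent set every subset of which is geometric. -/
def IsLatBasis {L : Type*} [CompleteLattice L] (rk : L → ℕ) (B : Set L) : Prop :=
  B ∈ latIndep L ∧ (∀ A ∈ latIndep L, B ⊆ A → A = B) ∧ ∀ S ⊆ B, S.ncard = rk (sSup S)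

/-!
Call a set of lattice elements irredundant if none of them lies below the join of the others. Adding
the elements of such a set one at a time raises the rank of the join by at least one each time, so
an irredundant set with `rk ⊤` elements leaves no slack: all its subsets are geometric. Bases are
thus exactly the irredundant sets with `rk ⊤` elements. This description passes from `I` to `I^opp`,
because `a ≤ ⋁(I \ {b})` for all `b ≠ a` in `I`, whereas `a ≰ ⋁(I \ {a})`. Moreover
`⋀_{b ≠ a} ⋁(I \ {b})` lies above `a` and has rank one, `I^opp` being a basis of the dual, so it is
`a`. Hence `opp` is an involution.
-/

section Irredundant

variable {L : Type*} [CompleteLattice L] {rk : L → ℕ} {B S : Set L}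

/-- A set is irredundant if none of its elements lies below the join of the others. For sets
of atoms this is `sSupIndep`; unlike the latter, it can be checked for `opp I` before the members
of `opp I` are known to be coatoms. -/
def IsIrredundant (B : Set L) : Prop :=
  ∀ a ∈ B, ¬ a ≤ sSup (B \ {a})

lemma IsIrredundant.mono (hB : IsIrredundant B) (hSB : S ⊆ B) : IsIrredundant S :=
  fun a ha hle => hB a (hSB ha) (hle.trans (sSup_le_sSup (sdiff_subset_sdiff_left hSB)))

lemma rank_sSup_add_ncard_sdiff_le_of_exists_not_le (hrk : StrictMono rk) (hB : B.Finite)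
    (hSB : S ⊆ B)
    (hpeel : ∀ T ⊆ B, (T \ S).Nonempty → ∃ a ∈ T \ S, ¬ a ≤ sSup (T \ {a})) :
    rk (sSup S) + (B \ S).ncard ≤ rk (sSup B) := by
  induction hn : (B \ S).ncard generalizing B with
  | zero => simpa using hrk.monotone (sSup_le_sSup hSB)
  | succ n ih =>
    have hne : (B \ S).Nonempty := (ncard_pos hB.sdiff).1 (by omega)
    obtain ⟨a, haBS, ha⟩ := hpeel B Subset.rfl hne
    have hcard : ((B \ {a}) \ S).ncard = n := by
      rw [sdiff_sdiff_comm, ncard_sdiff_singleton_of_mem haBS, hn, Nat.add_sub_cancel]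
    have hrec : rk (sSup S) + n ≤ rk (sSup (B \ {a})) :=
      ih hB.sdiff (subset_sdiff_singleton hSB haBS.2)
        (fun T hT => hpeel T (hT.trans sdiff_subset)) hcard
    have hlt : rk (sSup (B \ {a})) < rk (sSup B) :=
      hrk ((sSup_le_sSup sdiff_subset).lt_of_ne fun heq => ha (heq ▸ le_sSup haBS.1))
    omega

lemma IsIrredundant.rank_sSup_add_ncard_sdiff_le (hI : IsIrredundant B) (hrk : StrictMono rk)
    (hB : B.Finite) (hSB : S ⊆ B) : rk (sSup S) + (B \ S).ncard ≤ rk (sSup B) :=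
  rank_sSup_add_ncard_sdiff_le_of_exists_not_le hrk hB hSB fun _ hT ⟨a, ha⟩ =>
    ⟨a, ha, hI.mono hT a ha.1⟩

lemma IsIrredundant.ncard_eq_rank_sSup (hI : IsIrredundant B) (hrk : StrictMono rk)
    (hcard : B.encard = rk ⊤) (hSB : S ⊆ B) : S.ncard = rk (sSup S) := by
  have hB : B.Finite := finite_of_encard_eq_coe hcard
  have hBtop : B.ncard = rk ⊤ := by rw [ncard, hcard, ENat.toNat_natCast]
  have hS := (hI.mono hSB).rank_sSup_add_ncard_sdiff_le hrk (hB.subset hSB) (empty_subset S)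
  have hdiff := hI.rank_sSup_add_ncard_sdiff_le hrk hB hSB
  have htop : rk (sSup B) ≤ rk ⊤ := hrk.monotone le_top
  have hadd := ncard_sdiff_add_ncard_of_subset hSB hB
  rw [sdiff_empty] at hS
  omega

lemma finite_of_forall_ncard_eq_rank_sSup (hrk : Monotone rk)
    (hB : ∀ S ⊆ B, S.ncard = rk (sSup S)) : B.Finite := by
  refine not_infinite.1 fun hinf => ?_
  obtain ⟨b, hb⟩ := hinf.nonempty
  have hrank_b : 1 = rk b := by simpa using hB {b} (singleton_subset_iff.2 hb)
  have hrank_B : 0 = rk (sSup B) := hinf.ncard ▸ hB B Subset.rfl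
  have hle : rk b ≤ rk (sSup B) := hrk (le_sSup hb)
  omega

lemma isIrredundant_of_forall_ncard_eq_rank_sSup (hfin : B.Finite)
    (hB : ∀ S ⊆ B, S.ncard = rk (sSup S)) : IsIrredundant B := by
  intro a ha hle
  have hsup : sSup (B \ {a}) = sSup B := by
    rw [← sup_eq_right.2 hle, ← sSup_insert, insert_sdiff_self_of_mem ha]
  have hlt := ncard_sdiff_singleton_lt_of_mem ha hfin
  rw [hB _ sdiff_subset, hB B Subset.rfl, hsup] at hlt
  exact hlt.false

end Irredundant

section Independent

variable {L : Type*} [CompleteLattice L] {rk ω : L → ℕ} {A B : Set L} {c : L}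

lemma isAtom_of_rank_eq_one (hrk : StrictMono rk) (hbot : rk ⊥ = 0) {a : L} (ha : rk a = 1) :
    IsAtom a := by
  refine ⟨?_, fun x hxa => ?_⟩
  · rintro rfl
    omega
  · by_contra hx
    have hlt : rk x < rk a := hrk hxa
    have hpos : rk ⊥ < rk x := hrk (bot_lt_iff_ne_bot.2 hx)
    omega

lemma IsNBB.mono (hA : IsNBB ω A) (hBA : B ⊆ A) : IsNBB ω B :=
  ⟨fun b hb => hA.1 b (hBA hb), fun D hD => hA.2 D (hD.trans hBA)⟩

lemma IsNBB.exists_not_le_sSup_sdiff_singleton (hA : IsNBB ω A)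
    (hω : InjOn ω {a : L | IsAtom a}) (hne : A.Nonempty) : ∃ a ∈ A, ¬ a ≤ sSup (A \ {a}) := by
  obtain ⟨m, hm, hmin⟩ := exists_minimalFor_of_wellFoundedLT (· ∈ A) ω hne
  refine ⟨m, hm, fun hle => hA.2 (A \ {m}) sdiff_subset ⟨?_, m, hA.1 m hm, ?_, hle⟩⟩
  · by_contra hempty
    rw [not_nonempty_iff_eq_empty.1 hempty, sSup_empty, le_bot_iff] at hle
    exact (hA.1 m hm).1 hle
  · rintro d ⟨hd, hdm⟩
    have hωne : ω m ≠ ω d := fun h => hdm (hω (hA.1 m hm) (hA.1 d hd) h).symm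
    exact hωne.lt_of_le ((le_total _ _).elim id (hmin hd))

lemma IsNBB.ncard_le_rank_sSup (hA : IsNBB ω A) (hω : InjOn ω {a : L | IsAtom a})
    (hrk : StrictMono rk) (hfin : A.Finite) : A.ncard ≤ rk (sSup A) := by
  have hle := rank_sSup_add_ncard_sdiff_le_of_exists_not_le hrk hfin (empty_subset A)
    fun T hT hne => by
      rw [sdiff_empty] at hne ⊢
      exact (hA.mono hT).exists_not_le_sSup_sdiff_singleton hω hne
  rw [sdiff_empty] at hle
  omega

lemma empty_mem_latIndep [Countable L] : (∅ : Set L) ∈ latIndep L := by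
  obtain ⟨ω, hω⟩ := exists_injective_nat L
  exact ⟨ω, hω.injOn, by simp, fun D hD hBB => hBB.1.ne_empty (subset_empty_iff.1 hD)⟩

-- The new atom becomes the least one. It is then no lower bound of a subset of `A`, not being
-- below `⋁A`, and no set containing it has a strict lower bound.
lemma insert_mem_latIndep (hA : A ∈ latIndep L) (hc : IsAtom c) (hcA : ¬ c ≤ sSup A) :
    insert c A ∈ latIndep L := by
  classical
  obtain ⟨ω, hω, hatoms, hNBB⟩ := hA
  refine ⟨fun x => if x = c then 0 else ω x + 1, ?_, forall_mem_insert.2 ⟨hc, hatoms⟩, ?_⟩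
  · intro x hx y hy hxy
    dsimp only at hxy
    split_ifs at hxy with hxc hyc hyc
    · exact hxc.trans hyc.symm
    · exact hω hx hy (Nat.succ_injective hxy)
  · rintro D hD ⟨hne, a, ha, hlt, hle⟩
    have hcD : c ∉ D := fun h => by simpa using hlt c h
    have hDA : D ⊆ A := (subset_insert_iff_of_notMem hcD).1 hD
    have hac : a ≠ c := by
      rintro rfl
      exact hcA (hle.trans (sSup_le_sSup hDA))
    refine hNBB D hDA ⟨hne, a, ha, fun d hd => ?_, hle⟩
    simpa [hac, ne_of_mem_of_not_mem hd hcD] using hlt d hd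

lemma IsIrredundant.mem_latIndep [Countable L] (hI : IsIrredundant B)
    (hatoms : ∀ b ∈ B, IsAtom b) (hB : B.Finite) : B ∈ latIndep L := by
  induction B, hB using Set.Finite.induction_on with
  | empty => exact empty_mem_latIndep
  | @insert a S ha _ ih =>
    have hS : S ∈ latIndep L :=
      ih (hI.mono (subset_insert a S)) fun b hb => hatoms b (mem_insert_of_mem a hb)
    have haS : ¬ a ≤ sSup S := by
      simpa [insert_sdiff_self_of_notMem ha] using hI a (mem_insert a S)
    exact insert_mem_latIndep hS (hatoms a (mem_insert a S)) haS

lemma eq_of_subset_of_encard_eq_rank_top (hrk : StrictMono rk) (hcard : B.encard = rk ⊤)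
    (hA : A ∈ latIndep L) (hBA : B ⊆ A) : A = B := by
  obtain ⟨ω, hω, hNBB⟩ := hA
  have hfin : B.Finite := finite_of_encard_eq_coe hcard
  refine (hBA.antisymm fun a ha => ?_).symm
  by_contra haB
  have hle := (hNBB.mono (insert_subset ha hBA)).ncard_le_rank_sSup hω hrk (hfin.insert a)
  have htop : rk (sSup (insert a B)) ≤ rk ⊤ := hrk.monotone le_top
  have hBtop : B.ncard = rk ⊤ := by rw [ncard, hcard, ENat.toNat_natCast]
  rw [ncard_insert_of_notMem haB hfin] at hle
  omega

end Independent

section Basis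

variable {L : Type*} [CompleteLattice L] {rk : L → ℕ} {B : Set L} {a : L}

lemma IsLatBasis.rank_bot (hB : IsLatBasis rk B) : rk ⊥ = 0 := by
  simpa using (hB.2.2 ∅ (empty_subset B)).symm

lemma IsLatBasis.rank_eq_one (hB : IsLatBasis rk B) (ha : a ∈ B) : rk a = 1 := by
  simpa using (hB.2.2 {a} (singleton_subset_iff.2 ha)).symm

lemma IsLatBasis.sSup_eq_top (hB : IsLatBasis rk B) (hatoms : sSup {a : L | IsAtom a} = ⊤) :
    sSup B = ⊤ := by
  rw [eq_top_iff, ← hatoms]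
  refine sSup_le fun c hc => ?_
  by_contra hcB
  have hins := hB.2.1 _ (insert_mem_latIndep hB.1 hc hcB) (subset_insert c B)
  exact hcB (le_sSup (hins ▸ mem_insert c B))

lemma IsLatBasis.finite (hB : IsLatBasis rk B) (hrk : Monotone rk) : B.Finite :=
  finite_of_forall_ncard_eq_rank_sSup hrk hB.2.2

lemma IsLatBasis.isIrredundant (hB : IsLatBasis rk B) (hrk : Monotone rk) : IsIrredundant B :=
  isIrredundant_of_forall_ncard_eq_rank_sSup (hB.finite hrk) hB.2.2

lemma IsLatBasis.encard_eq_rank_top (hB : IsLatBasis rk B) (hrk : Monotone rk)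
    (hatoms : sSup {a : L | IsAtom a} = ⊤) : B.encard = rk ⊤ := by
  rw [← (hB.finite hrk).cast_ncard_eq, hB.2.2 B Subset.rfl, hB.sSup_eq_top hatoms]

lemma IsIrredundant.isLatBasis [Countable L] (hI : IsIrredundant B) (hrk : StrictMono rk)
    (hcard : B.encard = rk ⊤) : IsLatBasis rk B := by
  have hgeom : ∀ S ⊆ B, S.ncard = rk (sSup S) := fun S => hI.ncard_eq_rank_sSup hrk hcard
  have hbot : rk ⊥ = 0 := by simpa using (hgeom ∅ (empty_subset B)).symm
  have hatoms : ∀ b ∈ B, IsAtom b := fun b hb =>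
    isAtom_of_rank_eq_one hrk hbot (by simpa using (hgeom {b} (singleton_subset_iff.2 hb)).symm)
  exact ⟨hI.mem_latIndep hatoms (finite_of_encard_eq_coe hcard),
    fun _ => eq_of_subset_of_encard_eq_rank_top hrk hcard, hgeom⟩

end Basis

section Opposite

variable {L : Type*} [CompleteLattice L] {rk : L → ℕ} {I : Set L} {a b : L}

/-- The rank function `X ↦ rk ⊤ - rk X` of the dual lattice. The subtraction does not truncate when
`rk` is monotone. -/
def dualRank (rk : L → ℕ) : Lᵒᵈ → ℕ :=
  fun X => rk ⊤ - rk (OrderDual.ofDual X)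

/-- The member `⋁(I \ {a})` of `I^opp` at `a`, as an element of the dual lattice. -/
def oppAt (I : Set L) (a : L) : Lᵒᵈ :=
  OrderDual.toDual (sSup (I \ {a}))

/-- The set `I^opp` of all `⋁(I \ {a})` with `a ∈ I`, as a subset of the dual lattice. -/
def opp (I : Set L) : Set Lᵒᵈ :=
  OrderDual.toDual '' {x : L | ∃ a ∈ I, x = sSup (I \ {a})}

/-- The inverse of `opp`: the map `opp` of the dual lattice, read as taking values in the subsets
of `L` because `Lᵒᵈᵒᵈ` unfolds to `L`. -/
def dualOpp (J : Set Lᵒᵈ) : Set L :=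
  opp (L := Lᵒᵈ) J

lemma strictMono_dualRank (hrk : StrictMono rk) : StrictMono (dualRank rk) := by
  intro X Y hXY
  have hlt : rk (OrderDual.ofDual Y) < rk (OrderDual.ofDual X) := hrk hXY
  have hle : rk (OrderDual.ofDual X) ≤ rk ⊤ := hrk.monotone le_top
  simp only [dualRank]
  omega

lemma dualRank_top (hbot : rk ⊥ = 0) : dualRank rk ⊤ = rk ⊤ := by
  simp [dualRank, hbot]

lemma dualRank_dualRank (hrk : Monotone rk) (hbot : rk ⊥ = 0) :
    dualRank (dualRank rk) = rk ∘ OrderDual.ofDual ∘ OrderDual.ofDual := by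
  funext x
  have hle : rk (OrderDual.ofDual (OrderDual.ofDual x)) ≤ rk ⊤ := hrk le_top
  simp only [dualRank, OrderDual.ofDual_top, hbot, Function.comp_apply]
  omega

lemma opp_eq_image (I : Set L) : opp I = oppAt I '' I := by
  ext X
  constructor
  · rintro ⟨_, ⟨a, ha, rfl⟩, rfl⟩
    exact ⟨a, ha, rfl⟩
  · rintro ⟨a, ha, rfl⟩
    exact ⟨_, ⟨a, ha, rfl⟩, rfl⟩

lemma le_ofDual_oppAt (ha : a ∈ I) (hab : a ≠ b) : a ≤ OrderDual.ofDual (oppAt I b) :=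
  le_sSup ⟨ha, hab⟩

lemma sSup_opp_sdiff_singleton_le (ha : a ∈ I) :
    sSup (opp I \ {oppAt I a}) ≤ OrderDual.toDual a := by
  rw [opp_eq_image]
  refine sSup_le ?_
  rintro _ ⟨⟨b, -, rfl⟩, hne⟩
  exact le_ofDual_oppAt ha fun hab => hne (hab ▸ rfl)

lemma IsIrredundant.injOn_oppAt (hI : IsIrredundant I) : InjOn (oppAt I) I := by
  intro a ha b _ heq
  by_contra hab
  exact hI a ha (OrderDual.toDual.injective heq ▸ le_ofDual_oppAt ha hab)

lemma IsIrredundant.isIrredundant_opp (hI : IsIrredundant I) : IsIrredundant (opp I) := by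
  intro X hX hle
  rw [opp_eq_image] at hX
  obtain ⟨a, ha, rfl⟩ := hX
  exact hI a ha (hle.trans (sSup_opp_sdiff_singleton_le ha))

lemma IsIrredundant.encard_opp (hI : IsIrredundant I) : (opp I).encard = I.encard := by
  rw [opp_eq_image, hI.injOn_oppAt.encard_image]

lemma IsLatBasis.encard_opp (hI : IsLatBasis rk I) (hrk : Monotone rk)
    (hatoms : sSup {a : L | IsAtom a} = ⊤) : (opp I).encard = dualRank rk ⊤ := by
  rw [(hI.isIrredundant hrk).encard_opp, hI.encard_eq_rank_top hrk hatoms, dualRank_top hI.rank_bot]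

lemma IsLatBasis.isLatBasis_opp [Countable L] (hI : IsLatBasis rk I) (hrk : StrictMono rk)
    (hatoms : sSup {a : L | IsAtom a} = ⊤) : IsLatBasis (dualRank rk) (opp I) :=
  have : Countable Lᵒᵈ := inferInstanceAs (Countable L)
  (hI.isIrredundant hrk.monotone).isIrredundant_opp.isLatBasis (strictMono_dualRank hrk)
    (hI.encard_opp hrk.monotone hatoms)

lemma IsLatBasis.sSup_opp_sdiff_singleton (hI : IsLatBasis rk I) (hrk : StrictMono rk)
    (hatoms : sSup {a : L | IsAtom a} = ⊤) (ha : a ∈ I) :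
    sSup (opp I \ {oppAt I a}) = OrderDual.toDual a := by
  have hrk' := strictMono_dualRank hrk
  have hcard := hI.encard_opp hrk.monotone hatoms
  have hirr : IsIrredundant (opp I) := (hI.isIrredundant hrk.monotone).isIrredundant_opp
  have hmem : oppAt I a ∈ opp I := opp_eq_image I ▸ mem_image_of_mem _ ha
  have hrank : dualRank rk (sSup (opp I \ {oppAt I a})) = dualRank rk (OrderDual.toDual a) :=
    calc dualRank rk (sSup (opp I \ {oppAt I a}))
      _ = (opp I \ {oppAt I a}).ncard := (hirr.ncard_eq_rank_sSup hrk' hcard sdiff_subset).symm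
      _ = (opp I).ncard - 1 := ncard_sdiff_singleton_of_mem hmem
      _ = rk ⊤ - 1 := by rw [ncard, hcard, ENat.toNat_natCast, dualRank_top hI.rank_bot]
      _ = dualRank rk (OrderDual.toDual a) := by
        rw [dualRank, OrderDual.ofDual_toDual, hI.rank_eq_one ha]
  exact (sSup_opp_sdiff_singleton_le ha).eq_of_not_lt fun hlt => (hrk' hlt).ne hrank

lemma IsLatBasis.dualOpp_opp (hI : IsLatBasis rk I) (hrk : StrictMono rk)
    (hatoms : sSup {a : L | IsAtom a} = ⊤) : dualOpp (opp I) = I := by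
  have hoppAt : ∀ a ∈ I, oppAt (opp I) (oppAt I a) =
      OrderDual.toDual (OrderDual.toDual a) := fun a ha =>
    congrArg OrderDual.toDual (hI.sSup_opp_sdiff_singleton hrk hatoms ha)
  have himage : opp (opp I) = (fun a => OrderDual.toDual (OrderDual.toDual a)) '' I := by
    rw [← image_congr hoppAt, ← image_image, ← opp_eq_image I, opp_eq_image]
  exact himage.trans (image_id I)

lemma IsLatBasis.isLatBasis_dualOpp [Countable L] {J : Set Lᵒᵈ}
    (hJ : IsLatBasis (dualRank rk) J) (hrk : StrictMono rk) (hbot : rk ⊥ = 0)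
    (hcoatoms : sInf {a : L | IsCoatom a} = ⊥) : IsLatBasis rk (dualOpp J) := by
  have : Countable Lᵒᵈ := inferInstanceAs (Countable L)
  have hoppJ := hJ.isLatBasis_opp (strictMono_dualRank hrk) hcoatoms
  rw [dualRank_dualRank hrk.monotone hbot] at hoppJ
  exact hoppJ

lemma IsLatBasis.opp_dualOpp {J : Set Lᵒᵈ} (hJ : IsLatBasis (dualRank rk) J)
    (hrk : StrictMono rk) (hcoatoms : sInf {a : L | IsCoatom a} = ⊥) : opp (dualOpp J) = J :=
  hJ.dualOpp_opp (strictMono_dualRank hrk) hcoatoms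

theorem basis_opp_bijective_general [Countable L] (hrk : StrictMono rk) (hbot : rk ⊥ = 0)
    (hatoms : sSup {a : L | IsAtom a} = ⊤) (hcoatoms : sInf {a : L | IsCoatom a} = ⊥) :
    BijOn opp {B : Set L | IsLatBasis rk B} {B : Set Lᵒᵈ | IsLatBasis (dualRank rk) B} :=
  InvOn.bijOn (f' := dualOpp)
    ⟨fun _ hI => IsLatBasis.dualOpp_opp hI hrk hatoms,
      fun _ hJ => IsLatBasis.opp_dualOpp hJ hrk hcoatoms⟩
    (fun _ hI => IsLatBasis.isLatBasis_opp hI hrk hatoms)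
    (fun _ hJ => IsLatBasis.isLatBasis_dualOpp hJ hrk hbot hcoatoms)

end Opposite

/-- Let `L` be a finite atomic, coatomic, graded lattice. For a basis `I`
of `L`, the set `I^opp := {⋁(I \ {a}) | a ∈ I}` consists of coatoms of `L`, i.e. atoms of the
dual lattice `Lᵒᵈ` (whose rank function is `X ↦ rk ⊤ - rk X`), and the map `I ↦ I^opp` is a
bijection from the set of bases of `L` to the set of bases of `Lᵒᵈ`. -/
theorem basis_opp_bijective
    {L : Type*} [CompleteLattice L] [Fintype L] [IsAtomistic L] [IsCoatomistic L]
    (rk : L → ℕ) (hrk : IsGradedRk rk) :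
    Set.BijOn
      (fun I : Set L => OrderDual.toDual '' {x : L | ∃ a ∈ I, x = sSup (I \ {a})})
      {B : Set L | IsLatBasis rk B}
      {B : Set Lᵒᵈ | IsLatBasis (fun X : Lᵒᵈ => rk ⊤ - rk (OrderDual.ofDual X)) B} :=
  basis_opp_bijective_general (fun a b => hrk.2.1 a b) hrk.1
    sSup_atoms_eq_top (sSup_atoms_eq_top (α := Lᵒᵈ))
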